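/- Let σ, ν : ℝ² → ℝ be differentiable at a point x of the Euclidean plane and let x* ∈ ℝ². Assume: ⟨x − x*, ∇ν(x)⟩ = −ν(x); 0 ≤ σ(x) ≤ 1; 0 < ν(x) < 1; if σ(x) = 0 then ∇σ(x) = 0; and if σ(x) > 0 then ⟨x − x*, ∇σ(x)⟩ < 0. Then det(Dh(x)) > 0 and tr(Dh(x)) > 0; in particular the Fréchet derivative Dh(x) is a nonsingular (invertible) linear map on ℝ². -/

import Mathlib

/-!
With `u = x - x*`, the purging-type transformation is `h z = z + σ z (ν z - 1) (z - x*)`, so `Dh(x)`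
is the rank-one perturbation `v ↦ a v + φ(v) u` of a homothety, where `a = 1 + σ (ν - 1)` and
`φ = (ν - 1) Dσ + σ Dν`. Its eigenvalues are `a`, on the kernel of `φ`, and `a + φ(u)`, on the line
spanned by `u`. The first is positive as `0 < ν < 1` and `σ ≤ 1`. The Euler identity `Dν(u) = -ν`
cancels the `ν` terms in the second and leaves `(1 - σ) + (1 - ν) (-Dσ(u))`, a sum of two
nonnegative terms that do not vanish together.
-/

open RealInnerProductSpace

section RankOnePerturbation

open Module

lemma trace_smul_id_add_smulRight {R M : Type*} [CommRing R] [AddCommGroup M] [Module R M]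
    [Module.Free R M] [Module.Finite R M] (a : R) (φ : M →ₗ[R] R) (u : M) :
    LinearMap.trace R M (a • LinearMap.id + φ.smulRight u) = a * finrank R M + φ u := by
  rw [map_add, map_smul, LinearMap.trace_id, LinearMap.trace_smulRight, smul_eq_mul]

open Polynomial in
lemma charpoly_smulRight {R M : Type*} [CommRing R] [AddCommGroup M] [Module R M]
    [Module.Free R M] [Module.Finite R M] (φ : M →ₗ[R] R) (u : M) :
    (φ.smulRight u).charpoly = X ^ finrank R M - φ u • X ^ (finrank R M - 1) := by
  nontriviality R
  let b := Free.chooseBasis R M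
  have hdot : (b.repr u : _ → R) ⬝ᵥ (φ ∘ b) = φ u := by
    conv_rhs => rw [← b.sum_repr u]
    simp only [dotProduct, Function.comp_apply, map_sum, map_smul, smul_eq_mul]
  rw [← LinearMap.charpoly_toMatrix _ b, LinearMap.toMatrix_smulRight, Matrix.charpoly_vecMulVec,
    hdot, finrank_eq_card_basis b]

-- In rank `0` the truncated exponent does no harm, because then `φ u = 0`.
lemma det_smul_id_add_smulRight {R M : Type*} [CommRing R] [AddCommGroup M] [Module R M]
    [Module.Free R M] [Module.Finite R M] (a : R) (φ : M →ₗ[R] R) (u : M) :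
    LinearMap.det (a • LinearMap.id + φ.smulRight u) =
      a ^ finrank R M + φ u * a ^ (finrank R M - 1) := by
  have hsub : a • LinearMap.id + φ.smulRight u =
      algebraMap R (Module.End R M) a - (-φ).smulRight u := by
    ext v
    simp
  rw [hsub, ← LinearMap.eval_charpoly, charpoly_smulRight]
  simp

variable {K V : Type*} [Field K] [LinearOrder K] [IsStrictOrderedRing K]
  [AddCommGroup V] [Module K V] [FiniteDimensional K V] {a : K} {φ : V →ₗ[K] K} {u : V}

lemma det_smul_id_add_smulRight_pos (ha : 0 < a) (hau : 0 < a + φ u) :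
    0 < LinearMap.det (a • LinearMap.id + φ.smulRight u) := by
  rw [det_smul_id_add_smulRight]
  rcases subsingleton_or_nontrivial V with _ | _
  · rw [Subsingleton.elim u 0, map_zero, zero_mul, add_zero]
    positivity
  · calc 0 < (a + φ u) * a ^ (finrank K V - 1) := by positivity
      _ = a ^ finrank K V + φ u * a ^ (finrank K V - 1) := by
        rw [add_mul, mul_pow_sub_one finrank_pos.ne']

lemma trace_smul_id_add_smulRight_pos [Nontrivial V] (ha : 0 < a) (hau : 0 < a + φ u) :
    0 < LinearMap.trace K V (a • LinearMap.id + φ.smulRight u) := by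
  have hdim : (1 : K) ≤ finrank K V := mod_cast finrank_pos (R := K) (M := V)
  calc 0 < a + φ u := hau
    _ ≤ a * finrank K V + φ u := add_le_add_left (le_mul_of_one_le_right ha.le hdim) _
    _ = _ := (trace_smul_id_add_smulRight a φ u).symm

end RankOnePerturbation

/-- The purging-type transformation with center `c`, switch `σ` and deforming factor `ν`: the
interpolation, with weight `σ z`, between the identity and the radial deformation
`z ↦ c + ν z • (z - c)`. -/
def purgingTransformation {R M : Type*} [Ring R] [AddCommGroup M] [Module R M]
    (σ ν : M → R) (c z : M) : M :=
  σ z • (c + ν z • (z - c)) + (1 - σ z) • z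

lemma purgingTransformation_eq_add_smul {R M : Type*} [CommRing R] [AddCommGroup M] [Module R M]
    (σ ν : M → R) (c z : M) :
    purgingTransformation σ ν c z = z + (σ z * (ν z - 1)) • (z - c) := by
  rw [purgingTransformation]
  module

lemma hasFDerivAt_add_smul_sub {𝕜 E : Type*} [NontriviallyNormedField 𝕜] [NormedAddCommGroup E]
    [NormedSpace 𝕜 E] {g : E → 𝕜} {g' : E →L[𝕜] 𝕜} {x : E} (hg : HasFDerivAt g g' x) (c : E) :
    HasFDerivAt (fun z => z + g z • (z - c))
      ((1 + g x) • ContinuousLinearMap.id 𝕜 E + g'.smulRight (x - c)) x := by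
  rw [add_smul, one_smul, add_assoc]
  exact (hasFDerivAt_id x).add (hg.smul ((hasFDerivAt_id x).sub_const c))

lemma hasFDerivAt_purgingTransformation {𝕜 E : Type*} [NontriviallyNormedField 𝕜]
    [NormedAddCommGroup E] [NormedSpace 𝕜 E] {σ ν : E → 𝕜} {σ' ν' : E →L[𝕜] 𝕜} {x : E}
    (hσ : HasFDerivAt σ σ' x) (hν : HasFDerivAt ν ν' x) (c : E) :
    HasFDerivAt (purgingTransformation σ ν c)
      ((1 + σ x * (ν x - 1)) • ContinuousLinearMap.id 𝕜 E +
        (σ x • ν' + (ν x - 1) • σ').smulRight (x - c)) x := by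
  rw [funext (purgingTransformation_eq_add_smul σ ν c)]
  exact hasFDerivAt_add_smul_sub (hσ.mul (hν.sub_const 1)) c

theorem purging_transformation_nonsingular_general {E : Type*} [NormedAddCommGroup E]
    [NormedSpace ℝ E] [FiniteDimensional ℝ E] [Nontrivial E] {σ ν : E → ℝ} {σ' ν' : E →L[ℝ] ℝ}
    {c x : E} (hσ : HasFDerivAt σ σ' x) (hν : HasFDerivAt ν ν' x)
    (heuler : ν' (x - c) = -ν x) (hσ1 : σ x ≤ 1) (hν0 : 0 < ν x) (hν1 : ν x < 1)
    (hσ'_nonpos : σ' (x - c) ≤ 0) (hσ'_neg : σ x = 1 → σ' (x - c) < 0) :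
    0 < LinearMap.det (fderiv ℝ (purgingTransformation σ ν c) x : E →ₗ[ℝ] E) ∧
    0 < LinearMap.trace ℝ E (fderiv ℝ (purgingTransformation σ ν c) x : E →ₗ[ℝ] E) ∧
    Function.Bijective (fderiv ℝ (purgingTransformation σ ν c) x) := by
  set a := 1 + σ x * (ν x - 1) with ha
  set φ := σ x • ν' + (ν x - 1) • σ' with hφ
  have hderiv : (fderiv ℝ (purgingTransformation σ ν c) x : E →ₗ[ℝ] E) =
      a • LinearMap.id + (φ : E →ₗ[ℝ] ℝ).smulRight (x - c) := by
    rw [(hasFDerivAt_purgingTransformation hσ hν c).fderiv]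
    rfl
  have ha_pos : 0 < a :=
    calc 0 < ν x := hν0
      _ ≤ ν x + (1 - σ x) * (1 - ν x) :=
        le_add_of_nonneg_right (mul_nonneg (sub_nonneg.2 hσ1) (sub_pos.2 hν1).le)
      _ = a := by ring
  have hradial : a + φ (x - c) = (1 - σ x) + (1 - ν x) * -σ' (x - c) := by
    simp only [ha, hφ, add_apply, smul_apply, smul_eq_mul, heuler]
    ring
  have hradial_pos : 0 < a + φ (x - c) := by
    rw [hradial]
    rcases hσ1.lt_or_eq with hlt | heq
    · exact add_pos_of_pos_of_nonneg (sub_pos.2 hlt)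
        (mul_nonneg (sub_pos.2 hν1).le (neg_nonneg.2 hσ'_nonpos))
    · exact add_pos_of_nonneg_of_pos (sub_nonneg.2 hσ1)
        (mul_pos (sub_pos.2 hν1) (neg_pos.2 (hσ'_neg heq)))
  have hdet : 0 < LinearMap.det (fderiv ℝ (purgingTransformation σ ν c) x : E →ₗ[ℝ] E) :=
    hderiv ▸ det_smul_id_add_smulRight_pos ha_pos hradial_pos
  exact ⟨hdet, hderiv ▸ trace_smul_id_add_smulRight_pos ha_pos hradial_pos,
    (LinearMap.equivOfDetNeZero _ hdet.ne').bijective⟩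

/-- Nonsingularity of the Fréchet derivative of the purging-type transformation
`h(z) = σ(z)·(x* + ν(z)·(z - x*)) + (1 - σ(z))·z`: under the Euler identity
`⟨x - x*, ∇ν(x)⟩ = -ν(x)`, the bounds `0 ≤ σ(x) ≤ 1` and `0 < ν(x) < 1`, the vanishing
of `∇σ(x)` when `σ(x) = 0`, and the strict inequality `⟨x - x*, ∇σ(x)⟩ < 0` when
`σ(x) > 0`, the determinant and trace of `Dh(x)` are positive; in particular `Dh(x)` is
an invertible linear map on the plane. -/
theorem purging_transformation_nonsingular (σ ν : EuclideanSpace ℝ (Fin 2) → ℝ)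
    (xs x : EuclideanSpace ℝ (Fin 2))
    (hσ : DifferentiableAt ℝ σ x) (hν : DifferentiableAt ℝ ν x)
    (heuler : ⟪x - xs, gradient ν x⟫ = -ν x)
    (hσ0 : 0 ≤ σ x) (hσ1 : σ x ≤ 1) (hν0 : 0 < ν x) (hν1 : ν x < 1)
    (hgrad0 : σ x = 0 → gradient σ x = 0)
    (hgradneg : 0 < σ x → ⟪x - xs, gradient σ x⟫ < 0)
    (h : EuclideanSpace ℝ (Fin 2) → EuclideanSpace ℝ (Fin 2))
    (hh : h = fun z => σ z • (xs + ν z • (z - xs)) + (1 - σ z) • z) :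
    0 < LinearMap.det
        ((fderiv ℝ h x : EuclideanSpace ℝ (Fin 2) →L[ℝ] EuclideanSpace ℝ (Fin 2)) :
          EuclideanSpace ℝ (Fin 2) →ₗ[ℝ] EuclideanSpace ℝ (Fin 2)) ∧
    0 < LinearMap.trace ℝ (EuclideanSpace ℝ (Fin 2))
        ((fderiv ℝ h x : EuclideanSpace ℝ (Fin 2) →L[ℝ] EuclideanSpace ℝ (Fin 2)) :
          EuclideanSpace ℝ (Fin 2) →ₗ[ℝ] EuclideanSpace ℝ (Fin 2)) ∧
    Function.Bijective (fderiv ℝ h x) := by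
  simp only [inner_gradient_right, conj_trivial] at heuler hgradneg
  have hσ'_nonpos : fderiv ℝ σ x (x - xs) ≤ 0 := by
    rcases hσ0.eq_or_lt with hzero | hpos
    · rw [← toDual_gradient, hgrad0 hzero.symm, map_zero, zero_apply]
    · exact (hgradneg hpos).le
  rw [show h = purgingTransformation σ ν xs from hh]
  exact purging_transformation_nonsingular_general hσ.hasFDerivAt hν.hasFDerivAt heuler hσ1 hν0 hν1
    hσ'_nonpos fun hone => hgradneg (hone ▸ one_pos)
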